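/- arXiv:1204.2445 — 11 statements merged into one kernel-verified Lean document; each statement's English description precedes it below -/
import Mathlib

section
/- For every fixed positive integer p, a subset A of the real numbers is bounded if and only if A is p-quasi-Cauchy compact, i.e., if and only if every sequence of points in A has a p-quasi-Cauchy subsequence. -/
open Filter Topology

/-- A real sequence `x` is `p`-quasi-Cauchy if `x (n + p) - x n → 0`. -/
def PQuasiCauchy (p : ℕ) (x : ℕ → ℝ) : Prop :=
  Tendsto (fun n => x (n + p) - x n) atTop (𝓝 0)

/-!
A totally bounded set is relatively compact in the completion, so each of its sequences has a
Cauchy subsequence, and Cauchy sequences are `p`-quasi-Cauchy. Conversely, a set that is not totally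
bounded contains a sequence no two distinct terms of which are `V`-close, for some fixed entourage
`V`, so `x (k n)` and `x (k (n + p))` never come `V`-close along any subsequence `k`. In `ℝ` the
totally bounded sets are the bounded ones.
-/

open Set UniformSpace Uniformity

/-- A sequence in a uniform space is `p`-quasi-Cauchy if `x n` and `x (n + p)` are eventually
`V`-close for every entourage `V`. It extends `PQuasiCauchy` from `ℝ` to spaces without
subtraction. -/
def QuasiCauchySeq {X : Type*} [UniformSpace X] (p : ℕ) (x : ℕ → X) : Prop :=
  Tendsto (fun n => (x n, x (n + p))) atTop (𝓤 X)

theorem quasiCauchySeq_iff_pQuasiCauchy {p : ℕ} {x : ℕ → ℝ} :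
    QuasiCauchySeq p x ↔ PQuasiCauchy p x := by
  rw [QuasiCauchySeq, uniformity_eq_comap_nhds_zero, tendsto_comap_iff]
  rfl

section UniformSpace

variable {X : Type*} [UniformSpace X] {A : Set X}

theorem quasiCauchySeq_of_cauchySeq (p : ℕ) {x : ℕ → X} (hx : CauchySeq x) :
    QuasiCauchySeq p x :=
  (tendsto_map.prodMk (tendsto_map.comp (tendsto_add_atTop_nat p))).mono_right hx.2

theorem exists_seq_notMem_entourage_of_not_totallyBounded (hA : ¬ TotallyBounded A) :
    ∃ V ∈ 𝓤 X, ∃ x : ℕ → X, (∀ n, x n ∈ A) ∧ ∀ m n, m < n → (x m, x n) ∉ V := by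
  obtain ⟨V, hV, hcover⟩ : ∃ V ∈ 𝓤 X, ∀ t : Set X, t.Finite → ¬ A ⊆ ⋃ y ∈ t, ball y V := by
    contrapose! hA
    exact totallyBounded_of_forall_isSymm fun V hV _ => hA V hV
  refine ⟨V, hV, exists_seq_of_forall_finset_exists (· ∈ A) (fun y a => (y, a) ∉ V) fun t _ => ?_⟩
  obtain ⟨a, haA, ha⟩ := not_subset.mp (hcover t t.finite_toSet)
  exact ⟨a, haA, fun y hy hya => ha (mem_biUnion hy hya)⟩

theorem totallyBounded_of_forall_exists_quasiCauchySeq_subseq {p : ℕ} (hp : 0 < p)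
    (h : ∀ x : ℕ → X, (∀ n, x n ∈ A) →
      ∃ k : ℕ → ℕ, StrictMono k ∧ QuasiCauchySeq p (x ∘ k)) :
    TotallyBounded A := by
  by_contra hA
  obtain ⟨V, hV, x, hxA, hx⟩ := exists_seq_notMem_entourage_of_not_totallyBounded hA
  obtain ⟨k, hk, hquasi⟩ := h x hxA
  obtain ⟨n, hn⟩ := (hquasi.eventually_mem hV).exists
  exact hx (k n) (k (n + p)) (hk (Nat.lt_add_of_pos_right hp)) hn

variable [IsCountablyGenerated (𝓤 X)]

theorem exists_cauchySeq_subseq_of_totallyBounded (hA : TotallyBounded A) {x : ℕ → X}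
    (hx : ∀ n, x n ∈ A) : ∃ k : ℕ → ℕ, StrictMono k ∧ CauchySeq (x ∘ k) := by
  -- The metric makes the completion first countable, as extracting a subsequence requires.
  let _ := UniformSpace.pseudoMetricSpace X
  have hcompact : IsCompact (closure ((↑) '' A : Set (Completion X))) :=
    (hA.image (Completion.uniformContinuous_coe X)).closure.isCompact_of_isClosed isClosed_closure
  obtain ⟨_, -, k, hk, hlim⟩ :=
    hcompact.tendsto_subseq fun n => subset_closure (mem_image_of_mem _ (hx n))
  exact ⟨k, hk, (Completion.isUniformInducing_coe X).cauchy_map_iff.mp hlim.cauchySeq⟩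

theorem bounded_iff_pQuasiCauchy_compact_general {p : ℕ} (hp : 0 < p) :
    TotallyBounded A ↔
      ∀ x : ℕ → X, (∀ n, x n ∈ A) →
        ∃ k : ℕ → ℕ, StrictMono k ∧ QuasiCauchySeq p (x ∘ k) := by
  refine ⟨fun hA x hx => ?_, totallyBounded_of_forall_exists_quasiCauchySeq_subseq hp⟩
  obtain ⟨k, hk, hcauchy⟩ := exists_cauchySeq_subseq_of_totallyBounded hA hx
  exact ⟨k, hk, quasiCauchySeq_of_cauchySeq p hcauchy⟩

end UniformSpace

theorem totallyBounded_iff_isBounded {X : Type*} [PseudoMetricSpace X] [ProperSpace X]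
    {A : Set X} : TotallyBounded A ↔ Bornology.IsBounded A :=
  ⟨TotallyBounded.isBounded, fun hA => hA.isCompact_closure.totallyBounded.subset subset_closure⟩

/-- For every fixed positive integer `p`, a subset `A` of `ℝ` is bounded
iff every sequence of points in `A` has a `p`-quasi-Cauchy subsequence. -/
theorem bounded_iff_pQuasiCauchy_compact (p : ℕ) (hp : 0 < p) (A : Set ℝ) :
    Bornology.IsBounded A ↔
      ∀ x : ℕ → ℝ, (∀ n, x n ∈ A) →
        ∃ k : ℕ → ℕ, StrictMono k ∧ PQuasiCauchy p (x ∘ k) := by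
  simp only [← totallyBounded_iff_isBounded, bounded_iff_pQuasiCauchy_compact_general hp,
    quasiCauchySeq_iff_pQuasiCauchy]
end

section
/- A subset A of the real numbers is bounded if and only if every sequence of points in A has a slowly oscillating subsequence. -/
open Filter Topology

/-- A real sequence `x` is slowly oscillating if for every `ε > 0` there exist `δ > 0`
and a positive integer `N` such that `|x m - x n| < ε` whenever `N ≤ n`, `n ≤ m`, and
`m ≤ (1 + δ) * n`. -/
def SlowlyOscillating (x : ℕ → ℝ) : Prop :=
  ∀ ε : ℝ, 0 < ε → ∃ δ : ℝ, 0 < δ ∧ ∃ N : ℕ, 0 < N ∧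
    ∀ n m : ℕ, N ≤ n → n ≤ m → (m : ℝ) ≤ (1 + δ) * n → |x m - x n| < ε

/-!
Convergent sequences are slowly oscillating, so Bolzano–Weierstrass gives one direction. For the
other, an unbounded set contains a sequence whose terms are pairwise at distance at least `1`, a
property inherited by all its subsequences, whereas consecutive terms of a slowly oscillating
sequence become arbitrarily close, since `n + 1 ≤ (1 + δ) * n` for all large `n`.
-/

namespace SlowlyOscillating

theorem of_cauchySeq {x : ℕ → ℝ} (hx : CauchySeq x) : SlowlyOscillating x := by
  intro ε hε
  obtain ⟨N, hN⟩ := Metric.cauchySeq_iff.1 hx ε hε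
  exact ⟨1, one_pos, N + 1, N.succ_pos, fun n m hn hnm _ => hN m (by lia) n (by lia)⟩

theorem tendsto_succ_sub {x : ℕ → ℝ} (hx : SlowlyOscillating x) :
    Tendsto (fun n => x (n + 1) - x n) atTop (𝓝 0) := by
  refine Metric.tendsto_nhds.2 fun ε hε => ?_
  obtain ⟨δ, hδ, N, -, hN⟩ := hx ε hε
  have hlarge : ∀ᶠ n : ℕ in atTop, 1 ≤ δ * n :=
    (tendsto_natCast_atTop_atTop.const_mul_atTop hδ).eventually_ge_atTop 1
  filter_upwards [eventually_ge_atTop N, hlarge] with n hn hδn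
  have hle : ((n + 1 : ℕ) : ℝ) ≤ (1 + δ) * n := by
    push_cast
    linarith
  simpa only [Real.dist_eq, sub_zero] using hN n (n + 1) hn n.le_succ hle

end SlowlyOscillating

theorem exists_seq_pairwise_le_dist_of_not_isBounded {X : Type*} [PseudoMetricSpace X] {s : Set X}
    (hs : ¬ Bornology.IsBounded s) (r : ℝ) :
    ∃ u : ℕ → X, (∀ n, u n ∈ s) ∧ Pairwise fun m n => r ≤ dist (u m) (u n) := by
  have hsymm : Std.Symm fun x y : X => r ≤ dist x y := ⟨fun x y hxy => dist_comm x y ▸ hxy⟩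
  refine exists_seq_of_forall_finset_exists' (· ∈ s) (r ≤ dist · ·) fun t _ => ?_
  have hballs : Bornology.IsBounded (⋃ x ∈ t, Metric.ball x r) :=
    (Bornology.isBounded_biUnion_finset t).2 fun _ _ => Metric.isBounded_ball
  obtain ⟨y, hys, hy⟩ := Set.not_subset.1 fun hsub => hs (hballs.subset hsub)
  refine ⟨y, hys, fun x hx => ?_⟩
  rw [dist_comm]
  exact not_lt.1 fun hlt => hy (Set.mem_biUnion hx hlt)

/-- A subset `A` of `ℝ` is bounded iff every sequence of points in `A`
has a slowly oscillating subsequence. -/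
theorem bounded_iff_slowlyOscillating_compact (A : Set ℝ) :
    Bornology.IsBounded A ↔
      ∀ x : ℕ → ℝ, (∀ n, x n ∈ A) →
        ∃ k : ℕ → ℕ, StrictMono k ∧ SlowlyOscillating (x ∘ k) := by
  constructor
  · intro hA x hx
    obtain ⟨a, -, k, hk, hlim⟩ := tendsto_subseq_of_bounded hA hx
    exact ⟨k, hk, .of_cauchySeq hlim.cauchySeq⟩
  · intro h
    by_contra hA
    obtain ⟨x, hxA, hsep⟩ := exists_seq_pairwise_le_dist_of_not_isBounded hA 1
    obtain ⟨k, hk, hosc⟩ := h x hxA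
    obtain ⟨n, hn⟩ := (Metric.tendsto_nhds.1 hosc.tendsto_succ_sub 1 one_pos).exists
    have hclose : dist (x (k (n + 1))) (x (k n)) < 1 := by
      rwa [dist_zero_right, ← dist_eq_norm] at hn
    exact hclose.not_ge (hsep (hk n.lt_succ_self).ne')
end

section
/- Let p be a positive integer and E a subset of ℝ. If a function f : E → ℝ is p-quasi-Cauchy continuous on E, then f is quasi-Cauchy continuous on E, i.e., f maps quasi-Cauchy sequences of points in E to quasi-Cauchy sequences. -/
open Filter Topology

/-- A function `f` is `p`-quasi-Cauchy continuous on `E` if it maps `p`-quasi-Cauchy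
sequences of points in `E` to `p`-quasi-Cauchy sequences. -/
def PQuasiCauchyContinuousOn (p : ℕ) (f : ℝ → ℝ) (E : Set ℝ) : Prop :=
  ∀ x : ℕ → ℝ, (∀ n, x n ∈ E) → PQuasiCauchy p x → PQuasiCauchy p (fun n => f (x n))

section

variable {p q : ℕ} {x : ℕ → ℝ}

theorem PQuasiCauchy.comp_div (hp : 0 < p) (hx : PQuasiCauchy q x) :
    PQuasiCauchy (q * p) (fun n => x (n / p)) := by
  simpa only [PQuasiCauchy, Function.comp_def, Nat.add_mul_div_right _ _ hp] using
    hx.comp (Nat.tendsto_div_const_atTop hp.ne')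

theorem PQuasiCauchy.comp_mul (hp : 0 < p) (hx : PQuasiCauchy (q * p) x) :
    PQuasiCauchy q (fun n => x (n * p)) := by
  simpa only [PQuasiCauchy, Function.comp_def, id, Nat.add_mul] using
    hx.comp (tendsto_id.atTop_mul_const' hp)

end

theorem pQuasiCauchyContinuous_implies_quasiCauchyContinuous_general
    {p q : ℕ} (hp : 0 < p) {E : Set ℝ} {f : ℝ → ℝ}
    (hf : PQuasiCauchyContinuousOn (q * p) f E) :
    PQuasiCauchyContinuousOn q f E := by
  intro x hxE hx
  -- Repeat each term of `x` `p` times, apply `f`, and keep one term from each block.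
  have hfy : PQuasiCauchy (q * p) (fun n => f (x (n / p))) :=
    hf _ (fun n => hxE (n / p)) (hx.comp_div hp)
  simpa only [Nat.mul_div_cancel _ hp] using hfy.comp_mul hp

/-- If `f` is `p`-quasi-Cauchy continuous on `E` for a positive integer `p`,
then `f` is quasi-Cauchy continuous (i.e. `1`-quasi-Cauchy continuous) on `E`. -/
theorem pQuasiCauchyContinuous_implies_quasiCauchyContinuous
    (p : ℕ) (hp : 0 < p) (E : Set ℝ) (f : ℝ → ℝ)
    (hf : PQuasiCauchyContinuousOn p f E) :
    PQuasiCauchyContinuousOn 1 f E :=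
  pQuasiCauchyContinuous_implies_quasiCauchyContinuous_general hp (by rwa [one_mul])
end

section
/- Let p be a positive integer and E a subset of ℝ. If a function f : E → ℝ is p-quasi-Cauchy continuous on E, then f is continuous on E in the ordinary sense. -/
open Filter Topology

/-!
A sequence is quasi-Cauchy if and only if repeating each of its terms `p` times gives a
`p`-quasi-Cauchy sequence; applied to both `x` and `f ∘ x`, this reduces the theorem to `p = 1`.
If `u n → a` in `E`, then `a, u 0, a, u 1, …` converges, so it is quasi-Cauchy; the differences of
consecutive values of `f` along it include `f (u n) - f a`, which therefore tend to `0`.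
-/

/-- The sequence `u 0, v 0, u 1, v 1, …`, which makes `v n - u n` a difference of consecutive
terms. -/
def interleave {α : Type*} (u v : ℕ → α) (n : ℕ) : α :=
  if Even n then u (n / 2) else v (n / 2)

section Interleave

variable {α β : Type*} (u v : ℕ → α)

theorem interleave_two_mul (n : ℕ) : interleave u v (2 * n) = u n := by
  simp [interleave]

theorem interleave_two_mul_add_one (n : ℕ) : interleave u v (2 * n + 1) = v n := by
  have half_eq : (2 * n + 1) / 2 = n := by omega
  simp [interleave, half_eq]

theorem comp_interleave (g : α → β) : g ∘ interleave u v = interleave (g ∘ u) (g ∘ v) :=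
  funext fun _ => apply_ite g _ _ _

variable {u v} in
theorem tendsto_interleave {l : Filter α} (hu : Tendsto u atTop l) (hv : Tendsto v atTop l) :
    Tendsto (interleave u v) atTop l := by
  have tendsto_half : Tendsto (fun n : ℕ => n / 2) atTop atTop :=
    Nat.tendsto_div_const_atTop two_ne_zero
  exact (hu.comp tendsto_half).if' (hv.comp tendsto_half)

end Interleave

namespace PQuasiCauchy

theorem of_tendsto {x : ℕ → ℝ} {a : ℝ} (p : ℕ) (hx : Tendsto x atTop (𝓝 a)) :
    PQuasiCauchy p x := by
  simpa only [PQuasiCauchy, Function.comp_def, sub_self]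
    using (hx.comp (tendsto_add_atTop_nat p)).sub hx

theorem tendsto_sub_of_interleave {u v : ℕ → ℝ} (h : PQuasiCauchy 1 (interleave u v)) :
    Tendsto (fun n => v n - u n) atTop (𝓝 0) := by
  have tendsto_double : Tendsto (fun n : ℕ => 2 * n) atTop atTop :=
    tendsto_id.const_mul_atTop' two_pos
  simpa only [Function.comp_def, interleave_two_mul, interleave_two_mul_add_one]
    using h.comp tendsto_double

end PQuasiCauchy

theorem pQuasiCauchy_mul_comp_div_iff {k : ℕ} (hk : 0 < k) (p : ℕ) (x : ℕ → ℝ) :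
    PQuasiCauchy (k * p) (fun n => x (n / k)) ↔ PQuasiCauchy p x := by
  have tendsto_comp_div_iff : Tendsto ((fun m => x (m + p) - x m) ∘ fun n => n / k) atTop (𝓝 0) ↔
      Tendsto (fun m => x (m + p) - x m) atTop (𝓝 0) := by
    rw [← tendsto_map'_iff, map_div_atTop_eq_nat k hk]
  simpa only [PQuasiCauchy, Function.comp_def, Nat.add_mul_div_left _ _ hk]
    using tendsto_comp_div_iff

theorem PQuasiCauchyContinuousOn.of_mul {k p : ℕ} {f : ℝ → ℝ} {E : Set ℝ} (hk : 0 < k)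
    (hf : PQuasiCauchyContinuousOn (k * p) f E) : PQuasiCauchyContinuousOn p f E := fun x hxE hx =>
  (pQuasiCauchy_mul_comp_div_iff hk p (fun n => f (x n))).mp <|
    hf (fun n => x (n / k)) (fun n => hxE (n / k)) ((pQuasiCauchy_mul_comp_div_iff hk p x).mpr hx)

/-- If `f` is `p`-quasi-Cauchy continuous on `E` for a positive integer `p`,
then `f` is continuous on `E` in the ordinary sense. -/
theorem pQuasiCauchyContinuous_implies_continuousOn
    (p : ℕ) (hp : 0 < p) (E : Set ℝ) (f : ℝ → ℝ)
    (hf : PQuasiCauchyContinuousOn p f E) :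
    ContinuousOn f E := by
  have hf_one : PQuasiCauchyContinuousOn 1 f E := .of_mul hp (by rwa [mul_one])
  rw [continuousOn_iff_continuous_domRestrict, continuous_iff_seqContinuous]
  intro u a hu
  let x : ℕ → E := interleave (fun _ => a) u
  have hx : Tendsto x atTop (𝓝 a) := tendsto_interleave tendsto_const_nhds hu
  have hx_quasi : PQuasiCauchy 1 (fun n => (x n : ℝ)) :=
    .of_tendsto 1 ((continuous_subtype_val.tendsto a).comp hx)
  have hfx_quasi : PQuasiCauchy 1 (E.domRestrict f ∘ x) :=
    hf_one _ (fun n => (x n).2) hx_quasi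
  rw [comp_interleave] at hfx_quasi
  exact tendsto_sub_nhds_zero_iff.mp hfx_quasi.tendsto_sub_of_interleave
end

section
/- Let p be a positive integer. If f : E → ℝ is p-quasi-Cauchy continuous on a p-quasi-Cauchy compact subset E of ℝ, then the image f(E) is a p-quasi-Cauchy compact subset of ℝ. -/
open Filter Topology

/-- A subset `E` of `ℝ` is `p`-quasi-Cauchy compact if every sequence of points in `E`
has a `p`-quasi-Cauchy subsequence. -/
def PQuasiCauchyCompact (p : ℕ) (E : Set ℝ) : Prop :=
  ∀ x : ℕ → ℝ, (∀ n, x n ∈ E) → ∃ k : ℕ → ℕ, StrictMono k ∧ PQuasiCauchy p (x ∘ k)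

-- `P` and `Q` stand for the classes of quasi-Cauchy sequences in the domain and the codomain.
theorem pQuasiCauchyContinuous_image_pQuasiCauchyCompact_general
    {α β : Type*} {P : (ℕ → α) → Prop} {Q : (ℕ → β) → Prop} {E : Set α} {f : α → β}
    (hE : ∀ x : ℕ → α, (∀ n, x n ∈ E) → ∃ k : ℕ → ℕ, StrictMono k ∧ P (x ∘ k))
    (hf : ∀ x : ℕ → α, (∀ n, x n ∈ E) → P x → Q (f ∘ x))
    (y : ℕ → β) (hy : ∀ n, y n ∈ f '' E) :
    ∃ k : ℕ → ℕ, StrictMono k ∧ Q (y ∘ k) := by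
  choose x hxE hxy using hy
  obtain rfl : f ∘ x = y := funext hxy
  obtain ⟨k, hk, hPxk⟩ := hE x hxE
  exact ⟨k, hk, hf (x ∘ k) (fun n => hxE (k n)) hPxk⟩

/-- The `p`-quasi-Cauchy continuous image of a `p`-quasi-Cauchy compact
subset of `ℝ` is `p`-quasi-Cauchy compact. -/
theorem pQuasiCauchyContinuous_image_pQuasiCauchyCompact
    (p : ℕ) (hp : 0 < p) (E : Set ℝ) (f : ℝ → ℝ)
    (hE : PQuasiCauchyCompact p E) (hf : PQuasiCauchyContinuousOn p f E) :
    PQuasiCauchyCompact p (f '' E) :=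
  pQuasiCauchyContinuous_image_pQuasiCauchyCompact_general hE hf
end

section
/- Let p be a positive integer. If f : E → ℝ is p-quasi-Cauchy continuous on a compact subset E of ℝ, then the image f(E) is a compact subset of ℝ. -/
open Filter Topology

/-! Repeating each term of a quasi-Cauchy sequence `p` times gives a `p`-quasi-Cauchy sequence, so
`p`-quasi-Cauchy continuity reduces to the case `p = 1`. If `u → a`, then the alternating sequence
`a, u 0, a, u 1, …` converges and is thus quasi-Cauchy; consecutive terms of its image become
close, which forces `f (u n) → f a`. So `f` is sequentially continuous on `E`, and a continuous
image of a compact set is compact. -/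

open scoped Uniformity

section UniformSpace

variable {X Y : Type*} [UniformSpace X] [UniformSpace Y] {p q : ℕ} {x : ℕ → X} {f : X → Y}
  {E : Set X}

/-- The `p`-quasi-Cauchy sequences of a uniform space: the terms `x n` and `x (n + p)` become
arbitrarily close. On `ℝ` this is `PQuasiCauchy`, with the difference replaced by entourages. -/
def IsQuasiCauchySeq (p : ℕ) (x : ℕ → X) : Prop :=
  Tendsto (fun n => (x n, x (n + p))) atTop (𝓤 X)

/-- Preservation of `p`-quasi-Cauchy sequences of points of `E`, for a map between uniform spaces;
on `ℝ` this is `PQuasiCauchyContinuousOn`. -/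
def QuasiCauchyContinuousOn (p : ℕ) (f : X → Y) (E : Set X) : Prop :=
  ∀ x : ℕ → X, (∀ n, x n ∈ E) → IsQuasiCauchySeq p x → IsQuasiCauchySeq p (fun n => f (x n))

theorem isQuasiCauchySeq_of_tendsto {a : X} (hx : Tendsto x atTop (𝓝 a)) :
    IsQuasiCauchySeq p x :=
  (hx.prodMk_nhds (hx.comp (tendsto_add_atTop_nat p))).mono_right (nhds_le_uniformity a)

theorem isQuasiCauchySeq_mul_comp_div_iff (hp : 0 < p) :
    IsQuasiCauchySeq (p * q) (fun n => x (n / p)) ↔ IsQuasiCauchySeq q x := by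
  have hshift (n : ℕ) : (n + p * q) / p = n / p + q := Nat.add_mul_div_left n q hp
  simp only [IsQuasiCauchySeq, hshift]
  refine ⟨fun h => ?_, fun h => h.comp (Nat.tendsto_div_const_atTop hp.ne')⟩
  simpa only [Function.comp_def, id, Nat.mul_div_cancel _ hp] using
    h.comp (tendsto_id.atTop_mul_const' hp)

theorem QuasiCauchyContinuousOn.of_mul (hp : 0 < p) (hf : QuasiCauchyContinuousOn (p * q) f E) :
    QuasiCauchyContinuousOn q f E := fun x hxE hx =>
  (isQuasiCauchySeq_mul_comp_div_iff hp).mp <|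
    hf (fun n => x (n / p)) (fun n => hxE (n / p)) ((isQuasiCauchySeq_mul_comp_div_iff hp).mpr hx)

theorem QuasiCauchyContinuousOn.tendsto (hf : QuasiCauchyContinuousOn 1 f E) {u : ℕ → X} {a : X}
    (huE : ∀ n, u n ∈ E) (haE : a ∈ E) (hu : Tendsto u atTop (𝓝 a)) :
    Tendsto (fun n => f (u n)) atTop (𝓝 (f a)) := by
  let x : ℕ → X := fun n => if Even n then a else u (n / 2)
  have hxE (n : ℕ) : x n ∈ E := by
    dsimp only [x]
    split_ifs
    exacts [haE, huE _]
  have hx : Tendsto x atTop (𝓝 a) :=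
    tendsto_const_nhds.if' (hu.comp (Nat.tendsto_div_const_atTop two_ne_zero))
  have hx_even (n : ℕ) : x (n * 2) = a := if_pos (Nat.even_mul.mpr (.inr even_two))
  have hx_odd (n : ℕ) : x (n * 2 + 1) = u n := by
    have hn : (n * 2 + 1) / 2 = n := by lia
    simp only [x, hn, if_neg (show ¬Even (n * 2 + 1) by grind)]
  have hfx : Tendsto (fun n => (f (x (n * 2)), f (x (n * 2 + 1)))) atTop (𝓤 Y) :=
    (hf x hxE (isQuasiCauchySeq_of_tendsto hx)).comp (tendsto_id.atTop_mul_const' two_pos)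
  simpa only [hx_even, hx_odd, ← Uniform.tendsto_nhds_right] using hfx

theorem QuasiCauchyContinuousOn.continuousOn [SequentialSpace E] (hp : 0 < p)
    (hf : QuasiCauchyContinuousOn p f E) : ContinuousOn f E := by
  have hf_one : QuasiCauchyContinuousOn 1 f E := .of_mul hp (by rwa [mul_one])
  rw [continuousOn_iff_continuous_domRestrict]
  refine SeqContinuous.continuous fun u a hu => ?_
  exact hf_one.tendsto (fun n => (u n).2) a.2 ((continuous_subtype_val.tendsto a).comp hu)

theorem pQuasiCauchyContinuous_image_compact_general [SequentialSpace E] (hp : 0 < p)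
    (hE : IsCompact E) (hf : QuasiCauchyContinuousOn p f E) : IsCompact (f '' E) :=
  hE.image_of_continuousOn (hf.continuousOn hp)

end UniformSpace

theorem pQuasiCauchy_iff_isQuasiCauchySeq {p : ℕ} {x : ℕ → ℝ} :
    PQuasiCauchy p x ↔ IsQuasiCauchySeq p x := by
  rw [PQuasiCauchy, IsQuasiCauchySeq, uniformity_eq_comap_nhds_zero, tendsto_comap_iff,
    Function.comp_def]

theorem pQuasiCauchyContinuousOn_iff_quasiCauchyContinuousOn {p : ℕ} {f : ℝ → ℝ} {E : Set ℝ} :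
    PQuasiCauchyContinuousOn p f E ↔ QuasiCauchyContinuousOn p f E := by
  simp only [PQuasiCauchyContinuousOn, QuasiCauchyContinuousOn, pQuasiCauchy_iff_isQuasiCauchySeq]

/-- The `p`-quasi-Cauchy continuous image of a compact subset of `ℝ`
is compact. -/
theorem pQuasiCauchyContinuous_image_compact
    (p : ℕ) (hp : 0 < p) (E : Set ℝ) (f : ℝ → ℝ)
    (hE : IsCompact E) (hf : PQuasiCauchyContinuousOn p f E) :
    IsCompact (f '' E) :=
  pQuasiCauchyContinuous_image_compact_general hp hE
    (pQuasiCauchyContinuousOn_iff_quasiCauchyContinuousOn.mp hf)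
end

section
/- If f : E → ℝ is uniformly continuous on a subset E of ℝ, then f is p-quasi-Cauchy continuous on E for every positive integer p. -/
open Filter Topology

section Uniform

open Uniformity

variable {ι : Type*} {l : Filter ι}

theorem tendsto_uniformity_of_uniformContinuousOn {α β : Type*} [UniformSpace α] [UniformSpace β]
    {f : α → β} {s : Set α} {x y : ι → α} (hf : UniformContinuousOn f s)
    (hx : ∀ᶠ i in l, x i ∈ s) (hy : ∀ᶠ i in l, y i ∈ s)
    (hxy : Tendsto (fun i => (x i, y i)) l (𝓤 α)) :
    Tendsto (fun i => (f (x i), f (y i))) l (𝓤 β) :=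
  Tendsto.comp hf (tendsto_inf.2 ⟨hxy, tendsto_principal.2 (hx.and hy)⟩)

variable {G H : Type*} [AddGroup G] [UniformSpace G] [IsRightUniformAddGroup G]
  [AddGroup H] [UniformSpace H] [IsRightUniformAddGroup H]

theorem tendsto_uniformity_iff_tendsto_sub_nhds_zero {x y : ι → G} :
    Tendsto (fun i => (x i, y i)) l (𝓤 G) ↔ Tendsto (fun i => y i - x i) l (𝓝 0) := by
  rw [uniformity_eq_comap_nhds_zero, tendsto_comap_iff, Function.comp_def]

theorem uniformContinuousOn_implies_pQuasiCauchyContinuous_general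
    {f : G → H} {s : Set G} {x y : ι → G} (hf : UniformContinuousOn f s)
    (hx : ∀ᶠ i in l, x i ∈ s) (hy : ∀ᶠ i in l, y i ∈ s)
    (hxy : Tendsto (fun i => y i - x i) l (𝓝 0)) :
    Tendsto (fun i => f (y i) - f (x i)) l (𝓝 0) :=
  tendsto_uniformity_iff_tendsto_sub_nhds_zero.1 <|
    tendsto_uniformity_of_uniformContinuousOn hf hx hy <|
      tendsto_uniformity_iff_tendsto_sub_nhds_zero.2 hxy

end Uniform

/-- If `f` is uniformly continuous on a subset `E` of `ℝ`, then `f` is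
`p`-quasi-Cauchy continuous on `E` for every positive integer `p`. -/
theorem uniformContinuousOn_implies_pQuasiCauchyContinuous
    (E : Set ℝ) (f : ℝ → ℝ) (hf : UniformContinuousOn f E) :
    ∀ p : ℕ, 0 < p → PQuasiCauchyContinuousOn p f E :=
  fun p _ _ hx =>
    uniformContinuousOn_implies_pQuasiCauchyContinuous_general hf
      (.of_forall hx) (.of_forall fun n => hx (n + p))
end

section
/- If f : E → ℝ is slowly oscillating continuous on an interval E of ℝ, then f is p-quasi-Cauchy continuous on E for every positive integer p. -/
open Filter Topology

/-- A function `f` is slowly oscillating continuous on `E` if it maps slowly oscillating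
sequences of points in `E` to slowly oscillating sequences. -/
def SlowlyOscillatingContinuousOn (f : ℝ → ℝ) (E : Set ℝ) : Prop :=
  ∀ x : ℕ → ℝ, (∀ n, x n ∈ E) → SlowlyOscillating x →
    SlowlyOscillating (fun n => f (x n))

/-!
If `x` is quasi-Cauchy, then `y n = x ⌊log₂ n⌋` is slowly oscillating: as the index grows from `n`
to at most `2 * n`, the sequence `y` makes at most one step of `x`. Conversely, `y` makes exactly
one step of `x` between the consecutive indices `2 ^ (k + 1) - 1` and `2 ^ (k + 1)`. So `x` is
quasi-Cauchy exactly when `y` is slowly oscillating, and since `f ∘ y` is `f ∘ x` slowed down in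
the same way, `f` preserves quasi-Cauchy sequences. For general `p` this is applied along each
residue class modulo `p`.
-/

theorem tendsto_atTop_iff_forall_tendsto_mul_add {α : Type*} {p : ℕ} (hp : 0 < p) {u : ℕ → α}
    {l : Filter α} :
    Tendsto u atTop l ↔ ∀ i < p, Tendsto (fun k => u (p * k + i)) atTop l := by
  constructor
  · intro hu i _
    exact hu.comp ((tendsto_add_atTop_nat i).comp (tendsto_id.const_mul_atTop' hp))
  · intro hu s hs
    have hs_class : ∀ᶠ k in atTop, ∀ i ∈ Finset.range p, u (p * k + i) ∈ s :=
      (eventually_all_finset _).2 fun i hi => hu i (Finset.mem_range.1 hi) hs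
    have hs_div : ∀ᶠ n in atTop, ∀ i ∈ Finset.range p, u (p * (n / p) + i) ∈ s :=
      (map_div_atTop_eq_nat p hp).le hs_class
    refine hs_div.mono fun n hn => ?_
    simpa only [Nat.div_add_mod] using hn (n % p) (Finset.mem_range.2 (n.mod_lt hp))

theorem pQuasiCauchy_iff_forall_mul_add {p : ℕ} (hp : 0 < p) {x : ℕ → ℝ} :
    PQuasiCauchy p x ↔ ∀ i < p, PQuasiCauchy 1 fun k => x (p * k + i) := by
  simp only [PQuasiCauchy, mul_add_one, add_right_comm _ p]
  exact tendsto_atTop_iff_forall_tendsto_mul_add hp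

theorem SlowlyOscillating.pQuasiCauchy {x : ℕ → ℝ} (hx : SlowlyOscillating x) (p : ℕ) :
    PQuasiCauchy p x := by
  refine Metric.tendsto_nhds.2 fun ε hε => ?_
  obtain ⟨δ, hδ, N, -, hN⟩ := hx ε hε
  have hlarge : ∀ᶠ n : ℕ in atTop, (p : ℝ) ≤ δ * n :=
    (tendsto_natCast_atTop_atTop.const_mul_atTop hδ).eventually_ge_atTop _
  filter_upwards [eventually_ge_atTop N, hlarge] with n hn hpn
  rw [Real.dist_0_eq_abs]
  refine hN n (n + p) hn (n.le_add_right p) ?_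
  push_cast
  linarith

theorem PQuasiCauchy.slowlyOscillating_comp_log {b : ℕ} (hb : 1 < b) {x : ℕ → ℝ}
    (hx : PQuasiCauchy 1 x) : SlowlyOscillating fun n => x (Nat.log b n) := by
  intro ε hε
  obtain ⟨M, hM⟩ := Metric.tendsto_atTop.1 hx ε hε
  refine ⟨b - 1, sub_pos.2 (mod_cast hb), b ^ M, by positivity, fun n m hn hnm hm => ?_⟩
  have hn₀ : n ≠ 0 := ((show 0 < b ^ M by positivity).trans_le hn).ne'
  have hmb : m ≤ n * b := by exact_mod_cast (by linarith : (m : ℝ) ≤ n * b)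
  have hlog_ge : Nat.log b n ≤ Nat.log b m := Nat.log_mono_right hnm
  have hlog_le : Nat.log b m ≤ Nat.log b n + 1 :=
    (Nat.log_mono_right hmb).trans_eq (Nat.log_mul_base hb hn₀)
  obtain hlog | hlog : Nat.log b m = Nat.log b n ∨ Nat.log b m = Nat.log b n + 1 := by lia
  · simpa [hlog] using hε
  · simpa only [hlog, Real.dist_0_eq_abs] using hM _ (Nat.le_log_of_pow_le hb hn)

theorem pQuasiCauchy_one_of_slowlyOscillating_comp_log {b : ℕ} (hb : 1 < b) {x : ℕ → ℝ}
    (hx : SlowlyOscillating fun n => x (Nat.log b n)) : PQuasiCauchy 1 x := by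
  have hlt (k : ℕ) : k + 1 < b ^ (k + 1) := Nat.lt_pow_self hb
  have hlog (k : ℕ) : Nat.log b (b ^ (k + 1) - 1) = k := by
    have hpow : b ^ k < b ^ (k + 1) := Nat.pow_lt_pow_right hb k.lt_succ_self
    exact Nat.log_eq_of_pow_le_of_lt_pow (Nat.le_sub_one_of_lt hpow) (Nat.sub_one_lt_of_lt hpow)
  have hlog_succ (k : ℕ) : Nat.log b (b ^ (k + 1) - 1 + 1) = k + 1 := by
    rw [Nat.sub_add_cancel (Nat.one_le_of_lt (hlt k)), Nat.log_pow hb]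
  have htop : Tendsto (fun k => b ^ (k + 1) - 1) atTop atTop :=
    tendsto_atTop_mono (fun k => Nat.le_sub_one_of_lt (k.lt_succ_self.trans (hlt k))) tendsto_id
  simpa only [PQuasiCauchy, Function.comp_def, hlog, hlog_succ] using (hx.pQuasiCauchy 1).comp htop

theorem slowlyOscillating_comp_log_iff {b : ℕ} (hb : 1 < b) {x : ℕ → ℝ} :
    (SlowlyOscillating fun n => x (Nat.log b n)) ↔ PQuasiCauchy 1 x :=
  ⟨pQuasiCauchy_one_of_slowlyOscillating_comp_log hb, fun hx => hx.slowlyOscillating_comp_log hb⟩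

theorem SlowlyOscillatingContinuousOn.pQuasiCauchyContinuousOn_one {f : ℝ → ℝ} {E : Set ℝ}
    (hf : SlowlyOscillatingContinuousOn f E) : PQuasiCauchyContinuousOn 1 f E := by
  intro x hxE hx
  rw [← slowlyOscillating_comp_log_iff one_lt_two] at hx ⊢
  exact hf _ (fun _ => hxE _) hx

theorem PQuasiCauchyContinuousOn.of_one {f : ℝ → ℝ} {E : Set ℝ}
    (hf : PQuasiCauchyContinuousOn 1 f E) {p : ℕ} (hp : 0 < p) :
    PQuasiCauchyContinuousOn p f E := by
  intro x hxE hx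
  rw [pQuasiCauchy_iff_forall_mul_add hp] at hx ⊢
  exact fun i hi => hf _ (fun _ => hxE _) (hx i hi)

theorem slowlyOscillatingContinuous_implies_pQuasiCauchyContinuous_general
    {E : Set ℝ} {f : ℝ → ℝ} (hf : SlowlyOscillatingContinuousOn f E) {p : ℕ} (hp : 0 < p) :
    PQuasiCauchyContinuousOn p f E :=
  hf.pQuasiCauchyContinuousOn_one.of_one hp

/-- If `f` is slowly oscillating continuous on an interval `E` of `ℝ`
(a nonempty convex subset), then `f` is `p`-quasi-Cauchy continuous on `E` for every
positive integer `p`. -/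
theorem slowlyOscillatingContinuous_implies_pQuasiCauchyContinuous
    (E : Set ℝ) (hne : E.Nonempty) (hconv : Convex ℝ E) (f : ℝ → ℝ)
    (hf : SlowlyOscillatingContinuousOn f E) :
    ∀ p : ℕ, 0 < p → PQuasiCauchyContinuousOn p f E :=
  fun _ hp => slowlyOscillatingContinuous_implies_pQuasiCauchyContinuous_general hf hp
end

section
/- Let p be a positive integer and E an interval of ℝ. If (ξ_n) and (η_n) are sequences of points in E with lim_{n→∞} (ξ_n − η_n) = 0, then there exists a p-quasi-Cauchy sequence (x_n) of points in E with the property that for every positive integer i there exists an index j > p such that x_{j−p} = ξ_i and x_j = η_i. -/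
open Filter Topology

open Relation Set Uniformity

/-!
In a connected uniform space any two points are joined by a finite chain with arbitrarily small
steps. Walk from `ξ 0` to `η 0`, along such a chain to `ξ 1`, on to `η 1`, and so on, refining the
chains from one block to the next: consecutive points of this walk become close. Repeating each of
them `p` times turns steps of length one into steps of length `p`.
-/

lemma exists_eqOn_Icc_of_strictMono {α β : Type*} [PartialOrder α] [Nonempty β] {φ : ℕ → α}
    (hφ : StrictMono φ) {c : ℕ → α → β} (hc : ∀ i, c i (φ (i + 1)) = c (i + 1) (φ (i + 1))) :
    ∃ x : α → β, ∀ i, EqOn x (c i) (Icc (φ i) (φ (i + 1))) := by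
  have agree_of_le {i j : ℕ} {n : α} (hij : i ≤ j) (hi : n ∈ Icc (φ i) (φ (i + 1)))
      (hj : n ∈ Icc (φ j) (φ (j + 1))) : c i n = c j n := by
    obtain rfl | hlt := hij.eq_or_lt
    · rfl
    have hn : n = φ (i + 1) := hi.2.antisymm ((hφ.monotone hlt).trans hj.1)
    have hji : j = i + 1 := (hφ.le_iff_le.1 (hj.1.trans hi.2)).antisymm hlt
    rw [hji, hn, hc]
  have exists_common_value (n : α) : ∃ y, ∀ i, n ∈ Icc (φ i) (φ (i + 1)) → y = c i n := by
    by_cases h : ∃ i, n ∈ Icc (φ i) (φ (i + 1))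
    · obtain ⟨i, hi⟩ := h
      refine ⟨c i n, fun j hj => ?_⟩
      obtain hij | hji := le_total i j
      · exact agree_of_le hij hi hj
      · exact (agree_of_le hji hj hi).symm
    · exact ⟨Classical.arbitrary β, fun i hi => (h ⟨i, hi⟩).elim⟩
  choose x hx using exists_common_value
  exact ⟨x, fun i n hn => hx n i hn⟩

lemma eventually_of_eventually_forall_mem_Ico {α : Type*} [LinearOrder α] [NoMaxOrder α]
    {φ : ℕ → α} (hmono : Monotone φ) (hφ : Tendsto φ atTop atTop) {P : α → Prop}
    (h : ∀ᶠ i in atTop, ∀ n ∈ Ico (φ i) (φ (i + 1)), P n) : ∀ᶠ n in atTop, P n := by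
  obtain ⟨N, hN⟩ := eventually_atTop.1 h
  have hunbdd : ¬BddAbove (φ '' Ici N) := by
    rintro ⟨b, hb⟩
    obtain ⟨i, hbi, hNi⟩ := ((hφ.eventually_gt_atTop b).and (eventually_ge_atTop N)).exists
    exact hbi.not_ge (hb ⟨i, hNi, rfl⟩)
  have hcover := biUnion_Ici_Ico_map_succ (fun _ hi => hmono hi) hunbdd
  filter_upwards [eventually_ge_atTop (φ N)] with n hn
  obtain ⟨i, hi, hni⟩ := mem_iUnion₂.1 (hcover.ge hn)
  exact hN i hi n hni

lemma exists_seq_of_reflTransGen {α : Type*} {r : α → α → Prop} {a b : α}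
    (h : ReflTransGen r a b) :
    ∃ (c : ℕ → α) (m : ℕ), c 0 = a ∧ c m = b ∧ ∀ k < m, r (c k) (c (k + 1)) := by
  induction h using ReflTransGen.head_induction_on with
  | refl => exact ⟨fun _ => b, 0, rfl, rfl, by simp⟩
  | @head a a' hstep _ ih =>
    obtain ⟨c, m, rfl, hm, hc⟩ := ih
    refine ⟨fun | 0 => a | k + 1 => c k, m + 1, rfl, hm, ?_⟩
    rintro (_ | k) hk
    · exact hstep
    · exact hc k (Nat.lt_of_succ_lt_succ hk)

lemma exists_seq_concat {α : Type*} (N : ℕ) {m : ℕ → ℕ} (hm : ∀ i, 0 < m i) {c : ℕ → ℕ → α}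
    (hc : ∀ i, c i (m i) = c (i + 1) 0) :
    ∃ x : ℕ → α, ∃ φ : ℕ → ℕ, φ 0 = N ∧ (∀ i, φ (i + 1) = φ i + m i) ∧
      ∀ i, ∀ k ≤ m i, x (φ i + k) = c i k := by
  let φ (i : ℕ) : ℕ := N + ∑ j ∈ Finset.range i, m j
  have hφ_succ (i : ℕ) : φ (i + 1) = φ i + m i := by
    simp only [φ, Finset.sum_range_succ, add_assoc]
  have hφ : StrictMono φ := strictMono_nat_of_lt_succ fun i => by
    simpa only [hφ_succ] using Nat.lt_add_of_pos_right (hm i)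
  have : Nonempty α := ⟨c 0 0⟩
  obtain ⟨x, hx⟩ := exists_eqOn_Icc_of_strictMono hφ (c := fun i n => c i (n - φ i)) fun i => by
    simp only [hφ_succ i, Nat.add_sub_cancel_left, Nat.sub_self, hc]
  refine ⟨x, φ, rfl, hφ_succ, fun i k hk => ?_⟩
  have hmem : φ i + k ∈ Icc (φ i) (φ (i + 1)) := ⟨by omega, by rw [hφ_succ]; omega⟩
  simpa only [Nat.add_sub_cancel_left] using hx i hmem

lemma exists_seq_of_forall_reflTransGen {α : Type*} (N : ℕ) {r : ℕ → α → α → Prop} {a b : ℕ → α}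
    (hab : ∀ i, r i (a i) (b i)) (hba : ∀ i, ReflTransGen (r i) (b i) (a (i + 1))) :
    ∃ x : ℕ → α, ∃ φ : ℕ → ℕ, φ 0 = N ∧ StrictMono φ ∧
      (∀ i, x (φ i) = a i ∧ x (φ i + 1) = b i) ∧
      ∀ i, ∀ n ∈ Ico (φ i) (φ (i + 1)), r i (x n) (x (n + 1)) := by
  choose d l hd₀ hdl hd using fun i => exists_seq_of_reflTransGen (hba i)
  let c (i : ℕ) : ℕ → α
    | 0 => a i
    | k + 1 => d i k
  have hc_step (i k : ℕ) (hk : k < l i + 1) : r i (c i k) (c i (k + 1)) := by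
    obtain _ | k := k
    · simpa only [c, hd₀] using hab i
    · exact hd i k (Nat.lt_of_succ_lt_succ hk)
  obtain ⟨x, φ, hφ₀, hφ_succ, hx⟩ := exists_seq_concat N (fun i => (l i).succ_pos) (c := c) hdl
  refine ⟨x, φ, hφ₀, strictMono_nat_of_lt_succ fun i => ?_, fun i => ⟨?_, ?_⟩, fun i n hn => ?_⟩
  · rw [hφ_succ]
    omega
  · exact hx i 0 (Nat.zero_le _)
  · exact (hx i 1 (Nat.succ_le_succ (Nat.zero_le _))).trans (hd₀ i)
  · obtain ⟨k, rfl⟩ := Nat.exists_eq_add_of_le hn.1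
    have hk : k < l i + 1 := by simpa only [hφ_succ, Nat.add_lt_add_iff_left] using hn.2
    rw [hx i k hk.le, add_assoc, hx i (k + 1) hk]
    exact hc_step i k hk

lemma reflTransGen_mem_uniformity {X : Type*} [UniformSpace X] [PreconnectedSpace X]
    {V : SetRel X X} (hV : V ∈ 𝓤 X) (a b : X) : ReflTransGen (fun x y => (x, y) ∈ V) a b := by
  refine PreconnectedSpace.induction₂' _ (fun x => ?_) ⟨fun _ _ _ => ReflTransGen.trans⟩ a b
  filter_upwards [mem_nhds_left x hV, mem_nhds_right x hV] with y hxy hyx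
  exact ⟨.single hxy, .single hyx⟩

lemma exists_quasiCauchy_through_pairs {X : Type*} [UniformSpace X] [IsCountablyGenerated (𝓤 X)]
    [PreconnectedSpace X] {ξ η : ℕ → X} (hlim : Tendsto (fun n => (ξ n, η n)) atTop (𝓤 X)) :
    ∃ y : ℕ → X, Tendsto (fun n => (y n, y (n + 1))) atTop (𝓤 X) ∧
      ∀ i, ∃ k > 0, y k = ξ i ∧ y (k + 1) = η i := by
  obtain ⟨V, hV⟩ := (𝓤 X).exists_antitone_basis
  obtain ⟨y, φ, hφ₀, hφ, hpairs, hsteps⟩ := exists_seq_of_forall_reflTransGen 1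
    (r := fun i x y => (x, y) ∈ insert (ξ i, η i) (V i)) (fun i => mem_insert _ _)
    fun i => ReflTransGen.mono (fun _ _ => mem_insert_of_mem _) _ _
      (reflTransGen_mem_uniformity (hV.mem i) (η i) (ξ (i + 1)))
  refine ⟨y, fun U hU => ?_, fun i => ⟨φ i, ?_, hpairs i⟩⟩
  · refine eventually_of_eventually_forall_mem_Ico hφ.monotone hφ.tendsto_atTop ?_
    filter_upwards [hlim hU, hV.eventually_subset hU] with i hpair hVU n hn
    exact Set.insert_subset (a := (ξ i, η i)) hpair hVU (hsteps i n hn)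
  · exact (hφ₀ ▸ Nat.one_pos).trans_le (hφ.monotone i.zero_le)

lemma pQuasiCauchy_iff_tendsto_uniformity {p : ℕ} {x : ℕ → ℝ} :
    PQuasiCauchy p x ↔ Tendsto (fun n => (x n, x (n + p))) atTop (𝓤 ℝ) := by
  rw [uniformity_eq_comap_nhds_zero, tendsto_comap_iff]
  rfl

theorem exists_pQuasiCauchy_through_pairs_general {X : Type*} [UniformSpace X]
    [IsCountablyGenerated (𝓤 X)] {p : ℕ} (hp : 0 < p) {E : Set X} (hE : IsPreconnected E)
    {ξ η : ℕ → X} (hξ : ∀ n, ξ n ∈ E) (hη : ∀ n, η n ∈ E)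
    (hlim : Tendsto (fun n => (ξ n, η n)) atTop (𝓤 X)) :
    ∃ x : ℕ → X, (∀ n, x n ∈ E) ∧ Tendsto (fun n => (x n, x (n + p))) atTop (𝓤 X) ∧
      ∀ i : ℕ, ∃ j : ℕ, p < j ∧ x (j - p) = ξ i ∧ x j = η i := by
  have : PreconnectedSpace E := Subtype.preconnectedSpace hE
  lift ξ to ℕ → E using hξ
  lift η to ℕ → E using hη
  obtain ⟨y, hy, hpairs⟩ := exists_quasiCauchy_through_pairs (ξ := ξ) (η := η)
    (by rwa [uniformity_subtype, tendsto_comap_iff])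
  rw [uniformity_subtype, tendsto_comap_iff] at hy
  refine ⟨fun n => y (n / p), fun n => (y (n / p)).2, ?_, fun i => ?_⟩
  · simpa only [Nat.add_div_right _ hp, Function.comp_def] using
      hy.comp (Nat.tendsto_div_const_atTop hp.ne')
  · obtain ⟨k, hk, hξk, hηk⟩ := hpairs i
    refine ⟨k * p + p, Nat.lt_add_of_pos_left (Nat.mul_pos hk hp), ?_, ?_⟩
    · simp only [Nat.add_sub_cancel, Nat.mul_div_cancel _ hp, hξk]
    · simp only [Nat.add_div_right _ hp, Nat.mul_div_cancel _ hp, hηk]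

/-- Let `p` be a positive integer and `E` an interval (nonempty convex
subset) of `ℝ`. If `ξ` and `η` are sequences of points in `E` with `ξ n - η n → 0`,
then there exists a `p`-quasi-Cauchy sequence `x` of points in `E` such that for every
index `i` there exists an index `j > p` with `x (j - p) = ξ i` and `x j = η i`. -/
theorem exists_pQuasiCauchy_through_pairs
    (p : ℕ) (hp : 0 < p) (E : Set ℝ) (hne : E.Nonempty) (hconv : Convex ℝ E)
    (ξ η : ℕ → ℝ) (hξ : ∀ n, ξ n ∈ E) (hη : ∀ n, η n ∈ E)
    (hlim : Tendsto (fun n => ξ n - η n) atTop (𝓝 0)) :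
    ∃ x : ℕ → ℝ, (∀ n, x n ∈ E) ∧ PQuasiCauchy p x ∧
      ∀ i : ℕ, ∃ j : ℕ, p < j ∧ x (j - p) = ξ i ∧ x j = η i := by
  have hlim' : Tendsto (fun n => (ξ n, η n)) atTop (𝓤 ℝ) := by
    rwa [uniformity_eq_comap_nhds_zero_swapped, tendsto_comap_iff]
  simpa only [pQuasiCauchy_iff_tendsto_uniformity] using
    exists_pQuasiCauchy_through_pairs_general hp hconv.isPreconnected hξ hη hlim'
end

section
/- Let E be an interval of ℝ. A function f : E → ℝ is p-quasi-Cauchy continuous on E for some positive integer p if and only if f is slowly oscillating continuous on E. -/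
/-!
Both properties are equivalent to uniform continuity on `E`; the point is to recover uniform
continuity from the behaviour of `f` along slowly oscillating sequences, which are `p`-quasi-Cauchy
for every `p`.

If `g` is uniformly continuous then `n ↦ g (log n)` is slowly oscillating. Starting from the
Lipschitz function `t * sin (log t)`, which takes every real value arbitrarily late, and retracting
onto the closure of `E`, one obtains a slowly oscillating sequence in `E` that accumulates at every
point of `E`. Given points `a k`, `b k` of `E` with `b k - a k → 0`, replace sparse terms of this
sequence by the `a k`, respectively by the `b k`. The two resulting sequences are slowly oscillating
with difference tending to zero, so they can be interleaved in blocks of length `p` into one slowly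
oscillating sequence, along which `f` is `p`-quasi-Cauchy; hence `f (b k) - f (a k) → 0`.
-/

open Filter Topology

lemma uniformContinuousOn_of_forall_seq {α β : Type*} [PseudoMetricSpace α] [PseudoMetricSpace β]
    {f : α → β} {s : Set α}
    (h : ∀ a b : ℕ → α, (∀ k, a k ∈ s) → (∀ k, b k ∈ s) →
      Tendsto (fun k => dist (a k) (b k)) atTop (𝓝 0) →
        Tendsto (fun k => dist (f (a k)) (f (b k))) atTop (𝓝 0)) :
    UniformContinuousOn f s := by
  rw [Metric.uniformContinuousOn_iff]
  by_contra! hf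
  obtain ⟨ε, hε, hf⟩ := hf
  choose a ha b hb hab hfab using fun k : ℕ => hf (1 / ((k : ℝ) + 1)) (by positivity)
  have hlim : Tendsto (fun k => dist (a k) (b k)) atTop (𝓝 0) :=
    squeeze_zero (fun _ => dist_nonneg) (fun k => (hab k).le)
      tendsto_one_div_add_atTop_nhds_zero_nat
  obtain ⟨k, hk⟩ := ((h a b ha hb hlim).eventually_lt_const hε).exists
  exact hk.not_ge (hfab k)

lemma tendsto_extend_cofinite {α β γ : Type*} {φ : α → β} {u : α → γ} {v : β → γ} {l : Filter γ}
    (hu : Tendsto u cofinite l) (hv : Tendsto v cofinite l) :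
    Tendsto (Function.extend φ u v) cofinite l := by
  classical
  intro s hs
  refine (((hu hs).image φ).union (hv hs)).subset fun n hn => ?_
  rw [Set.mem_compl_iff, Set.mem_preimage, Function.extend_def] at hn
  split_ifs at hn with h
  · exact Or.inl ⟨h.choose, hn, h.choose_spec⟩
  · exact Or.inr hn

lemma tendsto_extend_sub_extend_cofinite {α β G : Type*} [AddGroup G] [TopologicalSpace G]
    {a b : α → G} (hab : Tendsto (fun k => b k - a k) cofinite (𝓝 0)) (φ : α → β) (y : β → G) :
    Tendsto (fun n => Function.extend φ b y n - Function.extend φ a y n) cofinite (𝓝 0) := by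
  have hyy : Tendsto (y - y) cofinite (𝓝 0) := by
    rw [sub_self]
    exact tendsto_const_nhds
  exact (tendsto_extend_cofinite hab hyy).congr (congrFun (Function.extend_sub φ b a y y))

lemma mapClusterPt_of_tendsto_sub {α G : Type*} [AddGroup G] [TopologicalSpace G]
    [ContinuousAdd G] {l : Filter α} {u v : α → G} {a : G}
    (hu : MapClusterPt a l u) (huv : Tendsto (fun i => v i - u i) l (𝓝 0)) :
    MapClusterPt a l v := by
  obtain ⟨U, hUl, hU⟩ := mapClusterPt_iff_ultrafilter.1 hu
  refine mapClusterPt_iff_ultrafilter.2 ⟨U, hUl, ?_⟩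
  simpa using (huv.mono_left hUl).add hU

lemma exists_strictMono_tendsto_sub {V : Type*} [SeminormedAddCommGroup V] {x a : ℕ → V}
    (ha : ∀ k, MapClusterPt (a k) atTop x) :
    ∃ φ : ℕ → ℕ, StrictMono φ ∧ Tendsto (fun k => a k - x (φ k)) atTop (𝓝 0) := by
  obtain ⟨φ, hφ, hdist⟩ := extraction_forall_of_frequently fun k =>
    (ha k).frequently (Metric.ball_mem_nhds (a k) (Nat.one_div_pos_of_nat (α := ℝ) (n := k)))
  refine ⟨φ, hφ, squeeze_zero_norm (fun k => ?_) tendsto_one_div_add_atTop_nhds_zero_nat⟩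
  rw [← dist_eq_norm, dist_comm]
  exact (hdist k).le

section Retraction

open scoped RealInnerProductSpace

variable {F : Type*} [NormedAddCommGroup F] [InnerProductSpace ℝ F]

lemma norm_sub_le_norm_sub_of_inner_nonpos {u v p q : F} (hp : ⟪u - p, q - p⟫ ≤ 0)
    (hq : ⟪v - q, p - q⟫ ≤ 0) : ‖p - q‖ ≤ ‖u - v‖ := by
  have hinner : ⟪p - q, p - q⟫ ≤ ⟪u - v, p - q⟫ := by
    have hsplit : ⟪u - v, p - q⟫ = ⟪p - q, p - q⟫ - ⟪u - p, q - p⟫ - ⟪v - q, p - q⟫ := by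
      simp only [inner_sub_left, inner_sub_right]
      ring
    linarith
  have hmul : ‖p - q‖ * ‖p - q‖ ≤ ‖u - v‖ * ‖p - q‖ :=
    calc ‖p - q‖ * ‖p - q‖ = ⟪p - q, p - q⟫ := (real_inner_self_eq_norm_mul_norm _).symm
      _ ≤ ⟪u - v, p - q⟫ := hinner
      _ ≤ ‖u - v‖ * ‖p - q‖ := real_inner_le_norm _ _
  rcases (norm_nonneg (p - q)).eq_or_lt with h | h
  · exact h ▸ norm_nonneg _
  · exact le_of_mul_le_mul_right hmul h

lemma exists_lipschitzWith_one_retraction {K : Set F} (hne : K.Nonempty) (hK : IsComplete K)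
    (hconv : Convex ℝ K) :
    ∃ r : F → F, LipschitzWith 1 r ∧ (∀ u, r u ∈ K) ∧ ∀ u ∈ K, r u = u := by
  choose r hrK hr using exists_norm_eq_iInf_of_complete_convex hne hK hconv
  have hinner : ∀ u, ∀ w ∈ K, ⟪u - r u, w - r u⟫ ≤ 0 := fun u =>
    (norm_eq_iInf_iff_real_inner_le_zero hconv (hrK u)).1 (hr u)
  refine ⟨r, LipschitzWith.mk_one fun u v => ?_, hrK, fun u hu => ?_⟩
  · rw [dist_eq_norm, dist_eq_norm]
    exact norm_sub_le_norm_sub_of_inner_nonpos (hinner u _ (hrK v)) (hinner v _ (hrK u))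
  · exact (sub_eq_zero.1 (real_inner_self_nonpos.1 (hinner u u hu))).symm

end Retraction

lemma lipschitzOnWith_mul_sin_log :
    LipschitzOnWith 2 (fun t : ℝ => t * Real.sin (Real.log t)) (Set.Ioi 0) := by
  have hderiv : ∀ t ∈ Set.Ioi (0 : ℝ), HasDerivWithinAt (fun t => t * Real.sin (Real.log t))
      (Real.sin (Real.log t) + Real.cos (Real.log t)) (Set.Ioi 0) t := fun t ht => by
    have ht0 : t ≠ 0 := ne_of_gt ht
    convert! ((hasDerivAt_id t).mul (Real.hasDerivAt_log ht0).sin).hasDerivWithinAt using 1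
    simp only [id]
    field_simp
  refine (convex_Ioi 0).lipschitzOnWith_of_nnnorm_hasDerivWithin_le hderiv fun t _ => ?_
  rw [← NNReal.coe_le_coe, coe_nnnorm]
  calc ‖Real.sin (Real.log t) + Real.cos (Real.log t)‖
      ≤ ‖Real.sin (Real.log t)‖ + ‖Real.cos (Real.log t)‖ := norm_add_le _ _
    _ ≤ 1 + 1 := add_le_add (Real.abs_sin_le_one _) (Real.abs_cos_le_one _)
    _ = 2 := by norm_num

lemma frequently_exp_mul_sin_eq (a : ℝ) : ∃ᶠ s in atTop, Real.exp s * Real.sin s = a := by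
  refine frequently_atTop.2 fun S => ?_
  obtain ⟨k, hk⟩ := exists_nat_ge (max S |a|)
  set s : ℝ := Real.pi / 2 + k * (2 * Real.pi) with hs
  have hks : (k : ℝ) ≤ s := by
    nlinarith [Real.pi_gt_three, (Nat.cast_nonneg k : (0 : ℝ) ≤ k)]
  have hsin : Real.sin s = 1 := by rw [hs, Real.sin_add_nat_mul_two_pi, Real.sin_pi_div_two]
  have hexp : ∀ t, s ≤ t → |a| ≤ Real.exp t := fun t ht => by
    linarith [le_max_right S |a|, Real.add_one_le_exp t]
  have hcont : ContinuousOn (fun t => Real.exp t * Real.sin t) (Set.Icc s (s + Real.pi)) := by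
    fun_prop
  have hle : s ≤ s + Real.pi := by linarith [Real.pi_pos]
  obtain ⟨t, ht, hta⟩ := intermediate_value_Icc' hle hcont (show a ∈ Set.Icc _ _ by
    simp only [Real.sin_add_pi, hsin, Set.mem_Icc, mul_one, mul_neg]
    exact ⟨neg_le.1 ((neg_le_abs a).trans (hexp _ hle)), (le_abs_self a).trans (hexp _ le_rfl)⟩)
  exact ⟨t, (le_max_left S |a|).trans (hk.trans (hks.trans ht.1)), hta⟩

lemma exists_lipschitzWith_frequently_eq :
    ∃ g : ℝ → ℝ, LipschitzWith 2 g ∧ ∀ a, ∃ᶠ t in atTop, g t = a := by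
  obtain ⟨g, hg, heq⟩ := lipschitzOnWith_mul_sin_log.extend_real
  refine ⟨g, hg, fun a => Real.tendsto_exp_atTop.frequently ?_⟩
  refine (frequently_exp_mul_sin_eq a).mono fun s hs => ?_
  simpa only [Real.log_exp, hs] using (heq (Real.exp_pos s)).symm

lemma tendsto_log_ceil_exp_sub :
    Tendsto (fun t : ℝ => Real.log ⌈Real.exp t⌉₊ - t) atTop (𝓝 0) := by
  have hratio : Tendsto (fun t => Real.log (⌈Real.exp t⌉₊ / Real.exp t)) atTop (𝓝 0) := by
    simpa using ((tendsto_nat_ceil_div_atTop (R := ℝ)).comp Real.tendsto_exp_atTop).log one_ne_zero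
  refine hratio.congr fun t => ?_
  have hceil : (0 : ℝ) < ⌈Real.exp t⌉₊ := Nat.cast_pos.2 (Nat.ceil_pos.2 (Real.exp_pos t))
  rw [Real.log_div hceil.ne' (Real.exp_pos t).ne', Real.log_exp]

lemma mapClusterPt_comp_log {V : Type*} [SeminormedAddCommGroup V] {g : ℝ → V}
    (hg : UniformContinuous g) {a : V} (ha : MapClusterPt a atTop g) :
    MapClusterPt a atTop fun n : ℕ => g (Real.log n) := by
  refine .of_comp (tendsto_nat_ceil_atTop.comp Real.tendsto_exp_atTop)
    (mapClusterPt_of_tendsto_sub ha ?_)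
  refine Metric.tendsto_nhds.2 fun ε hε => ?_
  obtain ⟨δ, hδ, h⟩ := Metric.uniformContinuous_iff.1 hg ε hε
  filter_upwards [Metric.tendsto_nhds.1 tendsto_log_ceil_exp_sub δ hδ] with t ht
  rw [dist_zero_right, ← dist_eq_norm] at ht ⊢
  exact h ht

lemma slowlyOscillating_comp_log {g : ℝ → ℝ} (hg : UniformContinuous g) :
    SlowlyOscillating fun n => g (Real.log n) := by
  intro ε hε
  obtain ⟨δ, hδ, h⟩ := Metric.uniformContinuous_iff.1 hg ε hε
  refine ⟨δ / 2, half_pos hδ, 1, one_pos, fun n m hn hnm hm => h ?_⟩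
  have hn0 : (0 : ℝ) < n := Nat.cast_pos.2 hn
  have hm0 : (0 : ℝ) < m := Nat.cast_pos.2 (hn.trans hnm)
  have hlog : Real.log n ≤ Real.log m := Real.log_le_log hn0 (Nat.cast_le.2 hnm)
  rw [Real.dist_eq, abs_of_nonneg (sub_nonneg.2 hlog)]
  calc Real.log m - Real.log n = Real.log (m / n) := (Real.log_div hm0.ne' hn0.ne').symm
    _ ≤ m / n - 1 := Real.log_le_sub_one_of_pos (by positivity)
    _ ≤ δ / 2 := by rw [sub_le_iff_le_add', div_le_iff₀ hn0]; exact hm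
    _ < δ := half_lt_self hδ

namespace SlowlyOscillating

lemma of_tendsto_sub {x y : ℕ → ℝ} (hy : SlowlyOscillating y)
    (hxy : Tendsto (fun n => x n - y n) atTop (𝓝 0)) : SlowlyOscillating x := by
  intro ε hε
  obtain ⟨δ, hδ, N, hN, hosc⟩ := hy (ε / 3) (by positivity)
  obtain ⟨M, hM⟩ := Metric.tendsto_atTop.1 hxy (ε / 3) (by positivity)
  simp only [dist_zero_right, Real.norm_eq_abs] at hM
  refine ⟨δ, hδ, max N M, lt_max_of_lt_left hN, fun n m hn hnm hm => ?_⟩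
  have hMn : M ≤ n := le_of_max_le_right hn
  calc |x m - x n| = |(x m - y m) + (y m - y n) - (x n - y n)| := by ring_nf
    _ ≤ |x m - y m| + |y m - y n| + |x n - y n| :=
      (abs_sub _ _).trans (add_le_add_left (abs_add_le _ _) _)
    _ < ε := by
      linarith [hM n hMn, hM m (hMn.trans hnm), hosc n m (le_of_max_le_left hn) hnm hm]

lemma comp_div {x : ℕ → ℝ} (hx : SlowlyOscillating x) {d : ℕ} (hd : 0 < d) :
    SlowlyOscillating fun n => x (n / d) := by
  intro ε hε
  obtain ⟨δ, hδ, N, hN, hosc⟩ := hx ε hε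
  obtain ⟨Q, hQ⟩ := exists_nat_ge ((1 + δ / 2) / (δ / 2))
  refine ⟨δ / 2, half_pos hδ, d * max N Q, by positivity, fun n m hn hnm hm => ?_⟩
  have hq : max N Q ≤ n / d := (Nat.le_div_iff_mul_le hd).2 (by rwa [mul_comm])
  refine hosc _ _ (le_of_max_le_left hq) (Nat.div_le_div_right hnm) ?_
  have : (0 : ℝ) < d := Nat.cast_pos.2 hd
  have hnq : (n : ℝ) ≤ d * ((n / d : ℕ) + 1) := by
    exact_mod_cast (Nat.lt_mul_div_succ n hd).le
  have hQq : 1 + δ / 2 ≤ (n / d : ℕ) * (δ / 2) :=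
    (div_le_iff₀ (half_pos hδ)).1 (hQ.trans (Nat.cast_le.2 (le_of_max_le_right hq)))
  calc ((m / d : ℕ) : ℝ) ≤ m / d := Nat.cast_div_le
    _ ≤ (1 + δ / 2) * n / d := by gcongr
    _ ≤ (1 + δ / 2) * (d * ((n / d : ℕ) + 1)) / d := by gcongr
    _ = (1 + δ / 2) * (n / d : ℕ) + (1 + δ / 2) := by field_simp
    _ ≤ (1 + δ / 2) * (n / d : ℕ) + (n / d : ℕ) * (δ / 2) := by gcongr
    _ = (1 + δ) * (n / d : ℕ) := by ring

lemma pQuasiCauchy_s13 {x : ℕ → ℝ} (hx : SlowlyOscillating x) (p : ℕ) : PQuasiCauchy p x := by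
  refine Metric.tendsto_atTop.2 fun ε hε => ?_
  obtain ⟨δ, hδ, N, -, hosc⟩ := hx ε hε
  obtain ⟨M, hM⟩ := exists_nat_ge (p / δ)
  refine ⟨max N M, fun n hn => ?_⟩
  rw [dist_zero_right]
  refine hosc n (n + p) (le_of_max_le_left hn) (Nat.le_add_right n p) ?_
  have hp : (p : ℝ) ≤ n * δ :=
    (div_le_iff₀ hδ).1 (hM.trans (Nat.cast_le.2 (le_of_max_le_right hn)))
  push_cast
  linarith

lemma extend {y : ℕ → ℝ} (hy : SlowlyOscillating y) {φ : ℕ → ℕ} {a : ℕ → ℝ}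
    (ha : Tendsto (fun k => a k - y (φ k)) atTop (𝓝 0)) :
    SlowlyOscillating (Function.extend φ a y) := by
  have hself : Function.extend φ (fun k => y (φ k)) y = y := by
    classical
    funext n
    rw [Function.extend_def]
    split_ifs with hn
    exacts [congrArg y hn.choose_spec, rfl]
  rw [← Nat.cofinite_eq_atTop] at ha
  have hlim := tendsto_extend_sub_extend_cofinite ha φ y
  rw [hself, Nat.cofinite_eq_atTop] at hlim
  exact hy.of_tendsto_sub hlim

end SlowlyOscillating

lemma exists_slowlyOscillating_mapClusterPt {E : Set ℝ} (hne : E.Nonempty) (hE : Convex ℝ E) :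
    ∃ x : ℕ → ℝ, (∀ n, x n ∈ E) ∧ SlowlyOscillating x ∧ ∀ a ∈ E, MapClusterPt a atTop x := by
  obtain ⟨g, hg, hfreq⟩ := exists_lipschitzWith_frequently_eq
  obtain ⟨r, hr, hrE, hrid⟩ :=
    exists_lipschitzWith_one_retraction hne.closure isClosed_closure.isComplete hE.closure
  have huc : UniformContinuous (r ∘ g) := hr.uniformContinuous.comp hg.uniformContinuous
  choose x hxE hx using fun n : ℕ =>
    Metric.mem_closure_iff.1 (hrE (g (Real.log n))) (1 / ((n : ℝ) + 1)) (by positivity)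
  have hlim : Tendsto (fun n => x n - (r ∘ g) (Real.log n)) atTop (𝓝 0) := by
    refine squeeze_zero_norm (fun n => ?_) tendsto_one_div_add_atTop_nhds_zero_nat
    rw [← dist_eq_norm, dist_comm]
    exact (hx n).le
  refine ⟨x, hxE, (slowlyOscillating_comp_log huc).of_tendsto_sub hlim, fun a ha => ?_⟩
  refine mapClusterPt_of_tendsto_sub (mapClusterPt_comp_log huc ?_) hlim
  refine mapClusterPt_iff_frequently.2 fun s hs => (hfreq a).mono fun t ht => ?_
  rw [Function.comp_apply, ht, hrid a (subset_closure ha)]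
  exact mem_of_mem_nhds hs

/-- `f` maps slowly oscillating sequences of points in `E` to `p`-quasi-Cauchy sequences. This
common weakening of `p`-quasi-Cauchy continuity and slowly oscillating continuity already forces
uniform continuity on intervals. -/
def MapsSlowlyOscillatingToPQuasiCauchyOn (p : ℕ) (f : ℝ → ℝ) (E : Set ℝ) : Prop :=
  ∀ x : ℕ → ℝ, (∀ n, x n ∈ E) → SlowlyOscillating x → PQuasiCauchy p fun n => f (x n)

section UniformContinuity

variable {E : Set ℝ} {f : ℝ → ℝ} {p : ℕ}

lemma PQuasiCauchyContinuousOn.mapsSlowlyOscillatingToPQuasiCauchyOn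
    (hf : PQuasiCauchyContinuousOn p f E) : MapsSlowlyOscillatingToPQuasiCauchyOn p f E :=
  fun x hxE hx => hf x hxE (hx.pQuasiCauchy_s13 p)

lemma SlowlyOscillatingContinuousOn.mapsSlowlyOscillatingToPQuasiCauchyOn
    (hf : SlowlyOscillatingContinuousOn f E) (p : ℕ) :
    MapsSlowlyOscillatingToPQuasiCauchyOn p f E :=
  fun x hxE hx => (hf x hxE hx).pQuasiCauchy_s13 p

namespace MapsSlowlyOscillatingToPQuasiCauchyOn

lemma tendsto_map_sub_of_slowlyOscillating (hf : MapsSlowlyOscillatingToPQuasiCauchyOn p f E)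
    (hp : 0 < p) {x y : ℕ → ℝ} (hxE : ∀ n, x n ∈ E) (hyE : ∀ n, y n ∈ E)
    (hx : SlowlyOscillating x) (hxy : Tendsto (fun n => y n - x n) atTop (𝓝 0)) :
    Tendsto (fun n => f (y n) - f (x n)) atTop (𝓝 0) := by
  have h2p : 0 < 2 * p := by positivity
  -- The terms of index `2 p j ≤ n < 2 p (j + 1)` are `p` copies of `x j`, then `p` copies of `y j`.
  let z : ℕ → ℝ := fun n => if Even (n / p) then x (n / (2 * p)) else y (n / (2 * p))
  have hzE : ∀ n, z n ∈ E := fun n => by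
    dsimp only [z]
    split_ifs
    exacts [hxE _, hyE _]
  have hz : SlowlyOscillating z := by
    have hlim := (hxy.comp (Nat.tendsto_div_const_atTop h2p.ne')).norm
    rw [norm_zero] at hlim
    refine (hx.comp_div h2p).of_tendsto_sub (squeeze_zero_norm (fun n => ?_) hlim)
    dsimp only [z]
    split_ifs
    · rw [sub_self, norm_zero]
      exact norm_nonneg _
    · rfl
  have hzx : ∀ n, z (2 * p * n) = x n := fun n => by
    have hblock : 2 * p * n / p = 2 * n := by
      rw [mul_right_comm, Nat.mul_div_cancel _ hp]
    simp only [z, hblock, even_two_mul, if_true, Nat.mul_div_cancel_left n h2p]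
  have hzy : ∀ n, z (2 * p * n + p) = y n := fun n => by
    have hblock : (2 * p * n + p) / p = 2 * n + 1 := by
      rw [Nat.add_div_right _ hp, mul_right_comm, Nat.mul_div_cancel _ hp]
    have hindex : (2 * p * n + p) / (2 * p) = n := by
      rw [Nat.mul_add_div h2p, Nat.div_eq_of_lt (by omega), add_zero]
    simp only [z, hblock, hindex, Nat.not_even_two_mul_add_one, if_false]
  have hmul : Tendsto (fun n => 2 * p * n) atTop atTop := tendsto_id.const_mul_atTop' h2p
  refine ((hf z hzE hz).comp hmul).congr fun n => ?_
  simp only [Function.comp_apply, hzx, hzy]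

lemma tendsto_map_sub (hf : MapsSlowlyOscillatingToPQuasiCauchyOn p f E) (hp : 0 < p)
    (hE : Convex ℝ E) {a b : ℕ → ℝ} (ha : ∀ k, a k ∈ E) (hb : ∀ k, b k ∈ E)
    (hab : Tendsto (fun k => b k - a k) atTop (𝓝 0)) :
    Tendsto (fun k => f (b k) - f (a k)) atTop (𝓝 0) := by
  obtain ⟨x, hxE, hx, hcluster⟩ := exists_slowlyOscillating_mapClusterPt ⟨a 0, ha 0⟩ hE
  obtain ⟨φ, hφ, hφa⟩ := exists_strictMono_tendsto_sub fun k => hcluster _ (ha k)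
  have hmem : ∀ c : ℕ → ℝ, (∀ k, c k ∈ E) → ∀ n, Function.extend φ c x n ∈ E := fun c hc n => by
    classical
    rw [Function.extend_def]
    split_ifs
    exacts [hc _, hxE n]
  have hext : Tendsto (fun n => Function.extend φ b x n - Function.extend φ a x n)
      atTop (𝓝 0) := by
    rw [← Nat.cofinite_eq_atTop] at hab ⊢
    exact tendsto_extend_sub_extend_cofinite hab φ x
  have hlim := hf.tendsto_map_sub_of_slowlyOscillating hp (hmem a ha) (hmem b hb)
    (hx.extend hφa) hext
  simpa only [Function.comp_def, hφ.injective.extend_apply] using hlim.comp hφ.tendsto_atTop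

lemma uniformContinuousOn (hf : MapsSlowlyOscillatingToPQuasiCauchyOn p f E) (hp : 0 < p)
    (hE : Convex ℝ E) : UniformContinuousOn f E := by
  refine uniformContinuousOn_of_forall_seq fun a b ha hb hab => ?_
  simp only [Real.dist_eq] at hab ⊢
  exact tendsto_zero_iff_abs_tendsto_zero _ |>.1
    (hf.tendsto_map_sub hp hE hb ha (tendsto_zero_iff_abs_tendsto_zero _ |>.2 hab))

end MapsSlowlyOscillatingToPQuasiCauchyOn

lemma pQuasiCauchyContinuousOn_of_uniformContinuousOn (hf : UniformContinuousOn f E) (p : ℕ) :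
    PQuasiCauchyContinuousOn p f E := by
  intro x hxE hx
  refine Metric.tendsto_atTop.2 fun ε hε => ?_
  obtain ⟨δ, hδ, huc⟩ := Metric.uniformContinuousOn_iff.1 hf ε hε
  obtain ⟨N, hN⟩ := Metric.tendsto_atTop.1 hx δ hδ
  simp only [dist_zero_right, ← dist_eq_norm] at hN ⊢
  exact ⟨N, fun n hn => huc _ (hxE _) _ (hxE _) (hN n hn)⟩

lemma slowlyOscillatingContinuousOn_of_uniformContinuousOn (hf : UniformContinuousOn f E) :
    SlowlyOscillatingContinuousOn f E := by
  intro x hxE hx ε hε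
  obtain ⟨η, hη, huc⟩ := Metric.uniformContinuousOn_iff.1 hf ε hε
  obtain ⟨δ, hδ, N, hN, hosc⟩ := hx η hη
  exact ⟨δ, hδ, N, hN, fun n m hn hnm hm => huc _ (hxE _) _ (hxE _) (hosc n m hn hnm hm)⟩

theorem pQuasiCauchyContinuousOn_iff_uniformContinuousOn (hp : 0 < p) (hE : Convex ℝ E) :
    PQuasiCauchyContinuousOn p f E ↔ UniformContinuousOn f E :=
  ⟨fun hf => hf.mapsSlowlyOscillatingToPQuasiCauchyOn.uniformContinuousOn hp hE,
    fun hf => pQuasiCauchyContinuousOn_of_uniformContinuousOn hf p⟩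

theorem slowlyOscillatingContinuousOn_iff_uniformContinuousOn (hE : Convex ℝ E) :
    SlowlyOscillatingContinuousOn f E ↔ UniformContinuousOn f E :=
  ⟨fun hf => (hf.mapsSlowlyOscillatingToPQuasiCauchyOn 1).uniformContinuousOn one_pos hE,
    slowlyOscillatingContinuousOn_of_uniformContinuousOn⟩

end UniformContinuity

/-- On an interval (nonempty convex subset) `E` of `ℝ`, a function `f`
is `p`-quasi-Cauchy continuous on `E` for some positive integer `p` iff `f` is
slowly oscillating continuous on `E`. -/
theorem pQuasiCauchyContinuous_iff_slowlyOscillatingContinuous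
    (E : Set ℝ) (hne : E.Nonempty) (hconv : Convex ℝ E) (f : ℝ → ℝ) :
    (∃ p : ℕ, 0 < p ∧ PQuasiCauchyContinuousOn p f E) ↔
      SlowlyOscillatingContinuousOn f E := by
  rw [slowlyOscillatingContinuousOn_iff_uniformContinuousOn hconv]
  constructor
  · rintro ⟨p, hp, hf⟩
    exact (pQuasiCauchyContinuousOn_iff_uniformContinuousOn hp hconv).1 hf
  · intro hf
    exact ⟨1, one_pos, (pQuasiCauchyContinuousOn_iff_uniformContinuousOn one_pos hconv).2 hf⟩
end

section
/- Let p be a positive integer and E a bounded subset of ℝ. The set of all p-quasi-Cauchy continuous functions from E to ℝ is a closed subset of the space of all bounded continuous real-valued functions on E equipped with the supremum metric. -/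
open Filter Topology BoundedContinuousFunction

open scoped Uniformity UniformConvergence

section Uniform

variable {ι κ α β : Type*} [UniformSpace β]

theorem tendsto_prodMk_uniformity_of_tendstoUniformly {F : ι → α → β} {f : α → β} {l : Filter ι}
    {m : Filter κ} {a b : κ → α} (hF : TendstoUniformly F f l)
    (hFab : ∃ᶠ i in l, Tendsto (fun k => (F i (a k), F i (b k))) m (𝓤 β)) :
    Tendsto (fun k => (f (a k), f (b k))) m (𝓤 β) := by
  refine tendsto_def.2 fun U hU => ?_
  obtain ⟨V, hV, _, hVU⟩ := comp_comp_symm_mem_uniformity_sets hU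
  obtain ⟨i, hFi, hfF⟩ := (hFab.and_eventually (hF V hV)).exists
  filter_upwards [hFi.eventually_mem hV] with k hk
  -- the chain `f (a k) ∼ F i (a k) ∼ F i (b k) ∼ f (b k)` of `V`-close points
  exact hVU ⟨F i (b k), ⟨F i (a k), hfF (a k), hk⟩, SetRel.symm V (hfF (b k))⟩

theorem isClosed_setOfPred_tendsto_prodMk_uniformity (m : Filter κ) (a b : κ → α) :
    IsClosed {f : α →ᵤ β |
      Tendsto (fun k => (UniformFun.toFun f (a k), UniformFun.toFun f (b k))) m (𝓤 β)} := by
  refine isClosed_iff_forall_filter.2 fun f u _ hu huf => ?_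
  rw [← tendsto_id', UniformFun.tendsto_iff_tendstoUniformly] at huf
  exact tendsto_prodMk_uniformity_of_tendstoUniformly huf
    (Eventually.frequently (le_principal_iff.1 hu))

/-- `p`-quasi-Cauchy sequences in a uniform space: `x (n + p)` and `x n` become arbitrarily close
as `n → ∞`. In `ℝ` this is `PQuasiCauchy`. -/
def UniformPQuasiCauchy (p : ℕ) (x : ℕ → β) : Prop :=
  Tendsto (fun n => (x (n + p), x n)) atTop (𝓤 β)

theorem uniformPQuasiCauchy_comp_iff_of_isUniformInducing [UniformSpace α] {f : α → β}
    (hf : IsUniformInducing f) {p : ℕ} {x : ℕ → α} :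
    UniformPQuasiCauchy p (f ∘ x) ↔ UniformPQuasiCauchy p x := by
  simp only [UniformPQuasiCauchy, ← hf.comap_uniformity, tendsto_comap_iff, Function.comp_def]

/-- A map between uniform spaces is `p`-quasi-Cauchy continuous if it sends `p`-quasi-Cauchy
sequences to `p`-quasi-Cauchy sequences. For a function on a set `E`, the domain is the
subtype `E`. -/
def PQuasiCauchyContinuous [UniformSpace α] (p : ℕ) (f : α → β) : Prop :=
  ∀ x : ℕ → α, UniformPQuasiCauchy p x → UniformPQuasiCauchy p (f ∘ x)

theorem isClosed_setOfPred_pQuasiCauchyContinuous [UniformSpace α] (p : ℕ) :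
    IsClosed {f : α →ᵤ β | PQuasiCauchyContinuous p (UniformFun.toFun f)} := by
  simp only [PQuasiCauchyContinuous, Set.ofPred_forall]
  exact isClosed_iInter fun x => isClosed_iInter fun _ =>
    isClosed_setOfPred_tendsto_prodMk_uniformity atTop (fun n => x (n + p)) x

end Uniform

theorem uniformPQuasiCauchy_iff_pQuasiCauchy {p : ℕ} {x : ℕ → ℝ} :
    UniformPQuasiCauchy p x ↔ PQuasiCauchy p x := by
  simp only [UniformPQuasiCauchy, PQuasiCauchy, tendsto_uniformity_iff_dist_tendsto_zero,
    Real.dist_eq, tendsto_zero_iff_abs_tendsto_zero (fun n => x (n + p) - x n),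
    Function.comp_def]

theorem pQuasiCauchyContinuous_iff_forall_pQuasiCauchy {E : Set ℝ} {p : ℕ} {f : E → ℝ} :
    PQuasiCauchyContinuous p f ↔
      ∀ x : ℕ → E, PQuasiCauchy p (fun n => (x n : ℝ)) → PQuasiCauchy p (fun n => f (x n)) := by
  refine forall_congr' fun x => imp_congr ?_ uniformPQuasiCauchy_iff_pQuasiCauchy
  exact (uniformPQuasiCauchy_comp_iff_of_isUniformInducing (isUniformInducing_val E)).symm.trans
    uniformPQuasiCauchy_iff_pQuasiCauchy

theorem pQuasiCauchyContinuous_isClosed_in_boundedContinuousFunctions_general {α β : Type*}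
    [UniformSpace α] [PseudoMetricSpace β] (p : ℕ) :
    IsClosed {g : α →ᵇ β | PQuasiCauchyContinuous p g} :=
  (isClosed_setOfPred_pQuasiCauchyContinuous p).preimage
    BoundedContinuousFunction.isInducing_coeFn.continuous

/-- Let `p` be a positive integer and `E` a bounded subset of `ℝ`.
The set of all `p`-quasi-Cauchy continuous functions from `E` to `ℝ` is a closed
subset of the space of bounded continuous real-valued functions on `E` with the
supremum metric. -/
theorem pQuasiCauchyContinuous_isClosed_in_boundedContinuousFunctions
    (p : ℕ) (hp : 0 < p) (E : Set ℝ) (hE : Bornology.IsBounded E) :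
    IsClosed {g : BoundedContinuousFunction E ℝ |
      ∀ x : ℕ → E, PQuasiCauchy p (fun n => (x n : ℝ)) →
        PQuasiCauchy p (fun n => g (x n))} := by
  simpa only [pQuasiCauchyContinuous_iff_forall_pQuasiCauchy] using
    pQuasiCauchyContinuous_isClosed_in_boundedContinuousFunctions_general (α := E) (β := ℝ) p
end
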